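/- Let Ω be a countably infinite set and r a measure representation over Ω. Define, for open A ⊆ Ω^∞, r(A) := Σ_{σ∈E} r(σ) where E is any prefix-free set with [E]≺ = A, and for arbitrary C ⊆ Ω^∞ define μ_r(C) := inf{ r(A) : C ⊆ A, A open }. Then μ_r is an outer measure on Ω^∞ satisfying μ_r(A) = r(A) for every open set A. -/

import Mathlib

open scoped ENNReal

/-- A set of finite strings is prefix-free. -/
def prefixFree {Γ : Type*} (E : Set (List Γ)) : Prop :=
  ∀ σ ∈ E, ∀ τ ∈ E, σ <+: τ → σ = τ

/-- The prefix of length `n` of an infinite sequence. -/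
def pre {Γ : Type*} (α : ℕ → Γ) (n : ℕ) : List Γ := List.ofFn fun i : Fin n => α i

/-- The open set generated by a set of strings: sequences having some prefix in `S`. -/
def cyl {Γ : Type*} (S : Set (List Γ)) : Set (ℕ → Γ) := {α | ∃ n, pre α n ∈ S}

/-- `r` is a measure representation over `Ω`: values in `[0,1]` and
`r σ = ∑_{a ∈ Ω} r (σ a)` for every string `σ`. -/
def MeasRep {Ω : Type*} (r : List Ω → ℝ) : Prop :=
  (∀ σ, 0 ≤ r σ ∧ r σ ≤ 1) ∧ ∀ σ : List Ω, HasSum (fun a : Ω => r (σ ++ [a])) (r σ)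

/-- The outer measure induced by a measure representation `r`:
`μ_r C` is the infimum of `r(A)` over open sets `A ⊇ C`, where every open set is
generated by a prefix-free set. -/
noncomputable def muR {Ω : Type*} (r : List Ω → ℝ) (C : Set (ℕ → Ω)) : ℝ≥0∞ :=
  ⨅ (E : Set (List Ω)) (_ : prefixFree E) (_ : C ⊆ cyl E),
    ∑' σ : E, ENNReal.ofReal (r (σ : List Ω))

open MeasureTheory in
noncomputable def mm {Ω : Type*} (R : List Ω → ℝ≥0∞) : @Measure (List Ω) ⊤ :=
  @Measure.sum _ _ ⊤ (fun σ => R σ • @Measure.dirac _ ⊤ σ)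

open MeasureTheory in
lemma mm_apply {Ω : Type*} (R : List Ω → ℝ≥0∞) (S : Set (List Ω)) :
    mm R S = ∑' σ : S, R σ := by
  letI : MeasurableSpace (List Ω) := ⊤
  unfold mm
  rw [Measure.sum_apply _ (MeasurableSpace.measurableSet_top), tsum_subtype S R]
  refine tsum_congr fun σ => ?_
  rw [Measure.smul_apply, Measure.dirac_apply' _ (MeasurableSpace.measurableSet_top)]
  by_cases h : σ ∈ S <;> simp [h]

lemma mm_single {Ω : Type*} (R : List Ω → ℝ≥0∞) (σ : List Ω) : mm R {σ} = R σ := by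
  rw [mm_apply]; simp

def ext' {Ω : Type*} (ρ : List Ω) : Set (List Ω) := {τ | ρ <+: τ}

lemma ext'_snoc {Ω : Type*} {ρ τ : List Ω} (h : ρ <+: τ) (hne : ρ ≠ τ) :
    ∃ a, ρ ++ [a] <+: τ := by
  obtain ⟨t, rfl⟩ := h
  cases t with
  | nil => simp at hne
  | cons a t => exact ⟨a, t, by simp⟩

lemma snoc_inj' {Ω : Type*} {ρ τ : List Ω} {a b : Ω} (h : ρ ++ [a] <+: τ)
    (h' : ρ ++ [b] <+: τ) : a = b := by
  obtain ⟨t, rfl⟩ := h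
  obtain ⟨u, hu⟩ := h'
  simp at hu
  exact hu.1.symm

open MeasureTheory in
lemma kraft {Ω : Type*} [Countable Ω] (R : List Ω → ℝ≥0∞)
    (hR : ∀ σ, ∑' a, R (σ ++ [a]) = R σ) (E : Set (List Ω)) (hE : prefixFree E)
    (ρ : List Ω) : mm R (E ∩ ext' ρ) ≤ R ρ := by
  letI : MeasurableSpace (List Ω) := ⊤
  have key : ∀ k (ρ : List Ω), mm R (E ∩ ext' ρ ∩ {τ | τ.length ≤ ρ.length + k}) ≤ R ρ := by
    intro k
    induction k with
    | zero =>
      intro ρ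
      rw [← mm_single R ρ]
      refine measure_mono ?_
      rintro τ ⟨⟨_, h⟩, hl⟩
      exact (h.eq_of_length_le (by simpa using hl)).symm
    | succ k ih =>
      intro ρ
      by_cases hρ : ρ ∈ E
      · rw [← mm_single R ρ]
        refine measure_mono ?_
        rintro τ ⟨⟨hτ, h⟩, hl⟩
        exact (hE ρ hρ τ hτ h).symm
      · calc _ ≤ mm R (⋃ a, (E ∩ ext' (ρ ++ [a]) ∩
              {τ | τ.length ≤ (ρ ++ [a]).length + k})) := by
              refine measure_mono ?_
              rintro τ ⟨⟨hτ, h⟩, hl⟩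
              obtain ⟨a, ha⟩ := ext'_snoc h (by rintro rfl; exact hρ hτ)
              refine Set.mem_iUnion.2 ⟨a, ⟨hτ, ha⟩, ?_⟩
              simp only [Set.mem_setOf_eq, List.length_append, List.length_singleton] at hl ⊢
              omega
          _ ≤ ∑' a, _ := measure_iUnion_le _
          _ ≤ ∑' a, R (ρ ++ [a]) := ENNReal.tsum_le_tsum fun a => ih _
          _ = R ρ := hR ρ
  have : E ∩ ext' ρ = ⋃ k, (E ∩ ext' ρ ∩ {τ | τ.length ≤ ρ.length + k}) := by
    ext τ
    simp only [Set.mem_iUnion, Set.mem_inter_iff, Set.mem_setOf_eq]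
    exact ⟨fun h => ⟨τ.length, h, by omega⟩, fun ⟨_, h, _⟩ => h⟩
  rw [this, Monotone.measure_iUnion]
  · exact iSup_le fun k => key k ρ
  · intro i j hij τ hτ
    refine ⟨hτ.1, ?_⟩
    have := hτ.2
    simp only [Set.mem_setOf_eq] at this ⊢
    omega

lemma pre_succ' {Γ : Type*} (α : ℕ → Γ) (n : ℕ) : pre α (n+1) = pre α n ++ [α n] := by
  unfold pre
  rw [List.ofFn_succ_last]
  simp

lemma pre_length {Γ : Type*} (α : ℕ → Γ) (n : ℕ) : (pre α n).length = n := by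
  simp [pre]

lemma pre_prefix {Γ : Type*} (α : ℕ → Γ) {m n : ℕ} (h : m ≤ n) : pre α m <+: pre α n := by
  induction n, h using Nat.le_induction with
  | base => exact List.prefix_rfl
  | succ n _ ih => rw [pre_succ']; exact ih.trans (List.prefix_append _ _)

open MeasureTheory in
lemma coverA {Ω : Type*} [Countable Ω] (R : List Ω → ℝ≥0∞)
    (hR : ∀ σ, ∑' a, R (σ ++ [a]) = R σ) (F : Set (List Ω)) (σ : List Ω)
    (hσ : cyl {σ} ⊆ cyl F) (hno : ∀ τ ∈ F, ¬ τ <+: σ) : R σ ≤ mm R (F ∩ ext' σ) := by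
  letI : MeasurableSpace (List Ω) := ⊤
  by_contra hbad
  rw [not_le] at hbad
  have hF : ∀ ρ, mm R (F ∩ ext' ρ) < R ρ → ρ ∉ F := by
    intro ρ h hρ
    refine h.not_ge ?_
    rw [← mm_single R ρ]
    refine measure_mono ?_
    rintro _ rfl
    exact ⟨hρ, List.prefix_rfl⟩
  have hstep : ∀ ρ : {ρ // mm R (F ∩ ext' ρ) < R ρ}, ∃ a,
      mm R (F ∩ ext' (ρ.1 ++ [a])) < R (ρ.1 ++ [a]) := by
    rintro ⟨ρ, h⟩
    by_contra! hc
    refine h.not_ge ?_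
    calc R ρ = ∑' a, R (ρ ++ [a]) := (hR ρ).symm
      _ ≤ ∑' a, mm R (F ∩ ext' (ρ ++ [a])) := ENNReal.tsum_le_tsum hc
      _ = mm R (⋃ a, F ∩ ext' (ρ ++ [a])) := by
        refine (measure_iUnion ?_ fun _ => MeasurableSpace.measurableSet_top).symm
        intro a b hab
        refine Set.disjoint_left.2 ?_
        rintro τ ⟨_, h1⟩ ⟨_, h2⟩
        exact hab (snoc_inj' h1 h2)
      _ ≤ _ := by
        refine measure_mono (Set.iUnion_subset fun a => ?_)
        rintro τ ⟨h1, h2⟩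
        exact ⟨h1, (List.prefix_append _ _).trans h2⟩
  choose nx hnx using hstep
  let s : ℕ → {ρ // mm R (F ∩ ext' ρ) < R ρ} :=
    fun n => Nat.rec ⟨σ, hbad⟩ (fun _ ρ => ⟨ρ.1 ++ [nx ρ], hnx ρ⟩) n
  let α : ℕ → Ω := fun i => if h : i < σ.length then σ[i] else nx (s (i - σ.length))
  have h0 : pre α σ.length = σ := by
    refine List.ext_getElem (pre_length _ _) ?_
    intro i h1 h2
    simp [pre, α, h2]
  have hs : ∀ n, pre α (σ.length + n) = (s n).1 := by
    intro n
    induction n with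
    | zero => exact h0
    | succ n ih =>
      rw [← add_assoc, pre_succ', ih]
      have : α (σ.length + n) = nx (s n) := by simp [α]
      rw [this]
  obtain ⟨n, hn⟩ := hσ (show α ∈ cyl {σ} from ⟨_, h0⟩)
  rcases le_total n σ.length with h | h
  · exact hno _ hn (by have := pre_prefix α h; rwa [h0] at this)
  · obtain ⟨k, rfl⟩ := Nat.exists_eq_add_of_le h
    rw [hs] at hn
    exact hF _ (s k).2 hn

open MeasureTheory in
lemma coverB {Ω : Type*} [Countable Ω] (R : List Ω → ℝ≥0∞)
    (hR : ∀ σ, ∑' a, R (σ ++ [a]) = R σ) (E F : Set (List Ω)) (hE : prefixFree E)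
    (hEF : cyl E ⊆ cyl F) : mm R E ≤ mm R F := by
  letI : MeasurableSpace (List Ω) := ⊤
  let F1 : Set (List Ω) := {τ | τ ∈ F ∧ ∃ σ ∈ E, τ <+: σ}
  let E2 : Set (List Ω) := {σ | σ ∈ E ∧ ∀ τ ∈ F, ¬ τ <+: σ}
  have h1 : mm R (⋃ τ : F1, E ∩ ext' τ.1) ≤ mm R F1 := by
    rw [mm_apply R F1]
    exact (measure_iUnion_le _).trans (ENNReal.tsum_le_tsum fun τ => kraft R hR E hE _)
  have h2 : mm R E2 ≤ mm R (F \ F1) := by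
    rw [mm_apply R E2]
    calc _ ≤ ∑' σ : E2, mm R (F ∩ ext' σ.1) := by
          refine ENNReal.tsum_le_tsum fun σ => coverA R hR F σ ?_ σ.2.2
          rintro α ⟨n, hn⟩
          refine hEF ⟨n, ?_⟩
          rw [Set.mem_singleton_iff.1 hn]
          exact σ.2.1
      _ = mm R (⋃ σ : E2, F ∩ ext' σ.1) := by
        refine (measure_iUnion ?_ fun _ => MeasurableSpace.measurableSet_top).symm
        intro a b hab
        refine Set.disjoint_left.2 ?_
        rintro τ ⟨_, h1⟩ ⟨_, h2⟩
        rcases List.prefix_or_prefix_of_prefix h1 h2 with h | h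
        · exact hab (Subtype.ext (hE _ a.2.1 _ b.2.1 h))
        · exact hab (Subtype.ext (hE _ b.2.1 _ a.2.1 h).symm)
      _ ≤ _ := by
        refine measure_mono (Set.iUnion_subset ?_)
        rintro ⟨σ, hσE, hσ⟩ τ ⟨hτ, hστ⟩
        refine ⟨hτ, ?_⟩
        rintro ⟨_, σ', hσ', h'⟩
        have := hE σ hσE σ' hσ' (List.IsPrefix.trans hστ h')
        subst this
        exact hσ τ hτ h'
  calc mm R E ≤ mm R ((⋃ τ : F1, E ∩ ext' τ.1) ∪ E2) := by
        refine measure_mono ?_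
        intro σ hσ
        by_cases h : ∃ τ ∈ F, τ <+: σ
        · obtain ⟨τ, hτ, h⟩ := h
          exact Or.inl (Set.mem_iUnion.2 ⟨⟨τ, hτ, σ, hσ, h⟩, hσ, h⟩)
        · push Not at h
          exact Or.inr ⟨hσ, h⟩
    _ ≤ _ := measure_union_le _ _
    _ ≤ mm R F1 + mm R (F \ F1) := add_le_add h1 h2
    _ = mm R (F1 ∪ (F \ F1)) :=
      (measure_union Set.disjoint_sdiff_right MeasurableSpace.measurableSet_top).symm
    _ ≤ mm R F := measure_mono (Set.union_subset (fun _ h => h.1) Set.diff_subset)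

lemma exists_pf {Ω : Type*} (S : Set (List Ω)) :
    ∃ E ⊆ S, prefixFree E ∧ cyl S ⊆ cyl E := by
  refine ⟨{σ | σ ∈ S ∧ ∀ τ ∈ S, τ <+: σ → τ = σ}, fun _ h => h.1, ?_, ?_⟩
  · intro σ hσ τ hτ h
    exact hτ.2 σ hσ.1 h
  · intro α hα
    classical
    refine ⟨Nat.find hα, Nat.find_spec hα, ?_⟩
    intro τ hτ h
    have hl : τ.length ≤ Nat.find hα := by simpa [pre_length] using h.length_le
    have : τ = pre α τ.length :=
      (List.prefix_of_prefix_length_le h (pre_prefix α hl) (by simp [pre_length])).eq_of_length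
        (by simp [pre_length])
    have h3 : Nat.find hα ≤ τ.length := Nat.find_min' hα (by rwa [← this])
    exact h.eq_of_length (by rw [pre_length]; omega)

/-- `μ_r` is an outer measure on `Ω^∞`: it vanishes on `∅`, is
monotone, is countably subadditive, and agrees with `r` on open sets (which are
exactly the sets generated by prefix-free sets of strings). -/
theorem stmt4 {Ω : Type*} [Countable Ω] [Infinite Ω] (r : List Ω → ℝ)
    (hr : MeasRep r) :
    muR r (∅ : Set (ℕ → Ω)) = 0 ∧
    (∀ C D : Set (ℕ → Ω), C ⊆ D → muR r C ≤ muR r D) ∧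
    (∀ f : ℕ → Set (ℕ → Ω), muR r (⋃ i, f i) ≤ ∑' i, muR r (f i)) ∧
    (∀ E : Set (List Ω), prefixFree E →
      muR r (cyl E) = ∑' σ : E, ENNReal.ofReal (r (σ : List Ω))) := by
  classical
  have hR : ∀ σ, ∑' a, ENNReal.ofReal (r (σ ++ [a])) = ENNReal.ofReal (r σ) := by
    intro σ
    rw [← (hr.2 σ).tsum_eq, ENNReal.ofReal_tsum_of_nonneg (fun a => (hr.1 _).1) (hr.2 σ).summable]
  have hmono : ∀ C D : Set (ℕ → Ω), C ⊆ D → muR r C ≤ muR r D := by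
    intro C D h
    refine le_iInf fun E => le_iInf fun hE => le_iInf fun hD => ?_
    exact iInf_le_of_le E (iInf_le_of_le hE (iInf_le_of_le (h.trans hD) le_rfl))
  refine ⟨?_, hmono, ?_, ?_⟩
  · refine le_antisymm ?_ zero_le
    refine iInf_le_of_le ∅ (iInf_le_of_le (by intro σ h; exact h.elim)
      (iInf_le_of_le (Set.empty_subset _) ?_))
    simp
  · intro f
    refine ENNReal.le_of_forall_pos_le_add fun ε hε hfin => ?_
    obtain ⟨δ, hδ, hsum⟩ := ENNReal.exists_pos_sum_of_countable
      (ENNReal.coe_pos.2 hε).ne' ℕ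
    have hch : ∀ i, ∃ E : Set (List Ω), f i ⊆ cyl E ∧
        ∑' σ : E, ENNReal.ofReal (r (σ : List Ω)) ≤ muR r (f i) + δ i := by
      intro i
      have hne : muR r (f i) ≠ ⊤ := ENNReal.ne_top_of_tsum_ne_top hfin.ne i
      have hlt : muR r (f i) < muR r (f i) + δ i :=
        ENNReal.lt_add_right hne (ENNReal.coe_pos.2 (hδ i)).ne'
      conv at hlt => lhs; unfold muR
      simp only [iInf_lt_iff] at hlt
      obtain ⟨E, _, hc, hlt⟩ := hlt
      exact ⟨E, hc, hlt.le⟩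
    choose E hc hle using hch
    obtain ⟨G, hGS, hG, hcov⟩ := exists_pf (⋃ i, E i)
    calc muR r (⋃ i, f i) ≤ ∑' σ : G, ENNReal.ofReal (r (σ : List Ω)) := by
          refine iInf_le_of_le G (iInf_le_of_le hG (iInf_le_of_le ?_ le_rfl))
          refine (Set.iUnion_subset fun i => ?_ : _ ⊆ cyl (⋃ i, E i)).trans hcov
          intro α hα
          obtain ⟨n, hn⟩ := hc i hα
          exact ⟨n, Set.mem_iUnion.2 ⟨i, hn⟩⟩
      _ = mm (fun σ => ENNReal.ofReal (r σ)) G :=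
        (mm_apply (fun σ => ENNReal.ofReal (r σ)) G).symm
      _ ≤ mm (fun σ => ENNReal.ofReal (r σ)) (⋃ i, E i) := MeasureTheory.measure_mono hGS
      _ ≤ ∑' i, mm (fun σ => ENNReal.ofReal (r σ)) (E i) := MeasureTheory.measure_iUnion_le _
      _ ≤ ∑' i, (muR r (f i) + δ i) :=
        ENNReal.tsum_le_tsum fun i => by rw [mm_apply]; exact hle i
      _ = ∑' i, muR r (f i) + ∑' i, (δ i : ℝ≥0∞) := ENNReal.tsum_add
      _ ≤ _ := by gcongr
  · intro E hE
    refine le_antisymm (iInf_le_of_le E (iInf_le_of_le hE (iInf_le_of_le subset_rfl le_rfl))) ?_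
    refine le_iInf fun F => le_iInf fun hF => le_iInf fun hEF => ?_
    have := coverB (fun σ => ENNReal.ofReal (r σ)) hR E F hE hEF
    rwa [mm_apply, mm_apply] at this
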